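/- arXiv:1505.01189 — 2 statements merged into one kernel-verified Lean document; each statement's English description precedes it below -/
import Mathlib

section
/- For every constant C > 0 there exist α > 0 and m₀ such that the following holds. Let k be a positive integer, let 0 < p ≤ 1/2, set q = 1 − p, and define p_i = C(k,i)·p^i·q^{k−i} for i = 0,1,...,k. Then for every integer m with m₀ ≤ m ≤ C·k·p, the maximal point probability of the multinomial distribution with parameters (m,(p₀,...,p_k)) satisfies Π(m,(p₀,...,p_k)) ≤ m^{−α·√m}. -/
/-!
The proof is by Poissonization. If `∑ pᵢ = 1` and `∑ aᵢ = m`, the multinomial point probability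
times `Poi(m)(m)` equals `∏ Poi(m pᵢ)(aᵢ)`, and `Poi(m)(m) ≥ 1 / (e √m)` by Stirling
(`multinomialProb_mul_poissonMass`, `one_le_poissonMass_self`). Every Poisson point mass satisfies
`Poi(x)(a) ≤ (1 + x)^{-1/2}` (`one_add_mul_poissonMass_sq_le`), so the squared point probability is
at most `e² m / ∏ (1 + m pᵢ)`.

The same estimate, applied to the binomial distribution written as a Poisson distribution
conditioned on its total, gives `pᵢ² k p ≤ 16` (`binomial_sq_le`). As `m ≤ C k p`, all the means
`m pᵢ` are at most `Λ = K √m` with `K = 4 √C + 1`. By Bernoulli's inequality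
`1 + x ≥ (1 + Λ)^{x / Λ}` for `0 ≤ x ≤ Λ`, and the means sum to `m`, hence
`∏ (1 + m pᵢ) ≥ (1 + Λ)^{m / Λ} ≥ m^{√m / (2K)}`, which absorbs the factor `e² m` for large `m`.
-/

/-- The point probability `Pr(X = a)` of a multinomial random variable with
parameters `(m, p)` where `m = ∑ i, a i`: the multinomial coefficient times `∏ pᵢ^{aᵢ}`. -/
noncomputable def multinomialProb {k : ℕ} (p : Fin k → ℝ) (a : Fin k → ℕ) : ℝ :=
  (Nat.multinomial Finset.univ a : ℝ) * ∏ i, p i ^ a i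

/-! ### Point masses of the Poisson distribution -/

/-- The mass at `a` of the Poisson distribution with mean `x`. -/
noncomputable def poissonMass (x : ℝ) (a : ℕ) : ℝ :=
  Real.exp (-x) * x ^ a / (a.factorial : ℝ)

/-- The right-hand side is the value of the left at its maximizer `x = n / 2`. -/
lemma pow_mul_exp_neg_le {x : ℝ} (hx : 0 ≤ x) {n : ℕ} (hn : 0 < n) :
    x ^ n * Real.exp (-(2 * x)) ≤ (n / (2 * Real.exp 1)) ^ n := by
  have hn' : (0 : ℝ) < n := by exact_mod_cast hn
  have h1 : x * Real.exp (-(2 * x / n)) ≤ n / (2 * Real.exp 1) := by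
    have h := Real.add_one_le_exp (2 * x / n - 1)
    rw [sub_add_cancel, Real.exp_sub] at h
    rw [Real.exp_neg, ← div_eq_mul_inv, div_le_div_iff₀ (Real.exp_pos _) (by positivity)]
    rw [div_le_div_iff₀ hn' (Real.exp_pos _)] at h
    nlinarith
  have h2 : Real.exp (-(2 * x)) = Real.exp (-(2 * x / n)) ^ n := by
    rw [← Real.exp_nat_mul]
    congr 1
    field_simp
  rw [h2, ← mul_pow]
  exact pow_le_pow_left₀ (by positivity) h1 n

/-- Every Poisson point mass is at most `(1 + x) ^ (-1/2)`, stated without square roots. For `a ≥ 1`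
the two summands of `(1 + x) x ^ (2 a) exp (-2 x)` are maximized over `x` separately and compared
with Stirling's lower bound for `a!`. -/
lemma one_add_mul_poissonMass_sq_le {x : ℝ} (hx : 0 ≤ x) (a : ℕ) :
    (1 + x) * poissonMass x a ^ 2 ≤ 1 := by
  have hE : Real.exp (-x) ^ 2 = Real.exp (-(2 * x)) := by
    rw [← Real.exp_nat_mul]; congr 1; push_cast; ring
  have hkey : (1 + x) * (x ^ (2 * a) * Real.exp (-(2 * x))) ≤ (a.factorial : ℝ) ^ 2 := by
    rcases Nat.eq_zero_or_pos a with rfl | ha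
    · have h := Real.add_one_le_exp (2 * x)
      simp only [mul_zero, pow_zero, one_mul, Nat.factorial_zero, Nat.cast_one, one_pow]
      rw [Real.exp_neg, ← div_eq_mul_inv, div_le_one (Real.exp_pos _)]
      linarith
    · have ha' : (1 : ℝ) ≤ a := by exact_mod_cast ha
      have h1 := pow_mul_exp_neg_le hx (n := 2 * a) (by omega)
      have h2 := pow_mul_exp_neg_le hx (n := 2 * a + 1) (by omega)
      have hs := Stirling.le_factorial_stirling a
      have hs2 : 2 * Real.pi * a * ((a : ℝ) / Real.exp 1) ^ (2 * a) ≤ (a.factorial : ℝ) ^ 2 := by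
        have := pow_le_pow_left₀ (by positivity) hs 2
        rw [mul_pow, Real.sq_sqrt (by positivity), ← pow_mul, mul_comm a 2] at this
        exact this
      set T : ℝ := ((a : ℝ) / Real.exp 1) ^ (2 * a) with hT
      have hT0 : 0 ≤ T := by positivity
      have e1 : (((2 * a : ℕ) : ℝ) / (2 * Real.exp 1)) ^ (2 * a) = T := by
        rw [hT]; congr 1; push_cast; field_simp
      have e2 : (((2 * a + 1 : ℕ) : ℝ) / (2 * Real.exp 1)) ^ (2 * a + 1)
          = T * (1 + 1 / (2 * a : ℝ)) ^ (2 * a) * ((a + 1 / 2) / Real.exp 1) := by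
        rw [hT, ← mul_pow, pow_succ]
        congr 1
        · congr 1; push_cast; field_simp
        · push_cast; field_simp
      have e3 : (1 + 1 / (2 * a : ℝ)) ^ (2 * a) ≤ Real.exp 1 := by
        have h := Real.add_one_le_exp (1 / (2 * a : ℝ))
        have h' := pow_le_pow_left₀ (by positivity) h (2 * a)
        rw [← Real.exp_nat_mul] at h'
        have : ((2 * a : ℕ) : ℝ) * (1 / (2 * a : ℝ)) = 1 := by push_cast; field_simp
        rw [this, add_comm] at h'
        exact h'
      have e4 : T * (1 + 1 / (2 * a : ℝ)) ^ (2 * a) * ((a + 1 / 2) / Real.exp 1)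
          ≤ T * (a + 1 / 2) := by
        calc _ ≤ T * Real.exp 1 * ((a + 1 / 2) / Real.exp 1) := by gcongr
          _ = T * (a + 1 / 2) := by field_simp
      rw [e1] at h1
      rw [e2] at h2
      have h3 := h2.trans e4
      have hpi := Real.pi_gt_three
      calc (1 + x) * (x ^ (2 * a) * Real.exp (-(2 * x)))
          = x ^ (2 * a) * Real.exp (-(2 * x)) + x ^ (2 * a + 1) * Real.exp (-(2 * x)) := by ring
        _ ≤ T + T * (a + 1 / 2) := add_le_add h1 h3
        _ = (a + 3 / 2) * T := by ring
        _ ≤ 2 * Real.pi * a * T := by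
            apply mul_le_mul_of_nonneg_right _ hT0
            nlinarith
        _ ≤ _ := hs2
  rw [poissonMass, div_pow, mul_pow, hE, ← pow_mul, mul_comm a 2, ← mul_div_assoc,
    div_le_one (by positivity), mul_comm (Real.exp _)]
  exact hkey

lemma poissonMass_nonneg {x : ℝ} (hx : 0 ≤ x) (a : ℕ) : 0 ≤ poissonMass x a := by
  unfold poissonMass; positivity

/-- Stirling's upper bound for `n!`, as a lower bound for the Poisson mass at its mean. -/
lemma one_le_poissonMass_self {n : ℕ} (hn : 0 < n) :
    1 ≤ Real.exp 1 * √n * poissonMass n n := by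
  obtain ⟨j, rfl⟩ : ∃ j, n = j + 1 := ⟨n - 1, by omega⟩
  have h := Stirling.stirlingSeq'_antitone (Nat.zero_le j)
  simp only [Function.comp, Nat.succ_eq_add_one, zero_add, Stirling.stirlingSeq_one] at h
  rw [Stirling.stirlingSeq, div_le_div_iff₀ (by positivity) (by positivity),
    Real.sqrt_mul (by norm_num)] at h
  have h2 : (0 : ℝ) < √2 := by positivity
  have hE : Real.exp (-((j + 1 : ℕ) : ℝ)) = (Real.exp 1 ^ (j + 1))⁻¹ := by
    rw [Real.exp_neg, ← Real.exp_nat_mul, mul_one]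
  rw [poissonMass, ← mul_div_assoc, one_le_div (by positivity), hE]
  rw [div_pow] at h
  refine le_of_mul_le_mul_right (h.trans_eq ?_) h2
  field_simp

/-! ### Poissonization of multinomial and binomial distributions -/

/-- Poissonization: independent Poisson variables conditioned on their sum are multinomial. -/
lemma multinomialProb_mul_poissonMass {n : ℕ} (p : Fin n → ℝ) (hp : ∑ i, p i = 1)
    (m : ℕ) (a : Fin n → ℕ) (ha : ∑ i, a i = m) :
    multinomialProb p a * poissonMass m m = ∏ i, poissonMass (m * p i) (a i) := by
  have hspec : (∏ i, ((a i).factorial : ℝ)) * (Nat.multinomial Finset.univ a : ℝ)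
      = (m.factorial : ℝ) := by
    have := Nat.multinomial_spec Finset.univ a
    rw [ha] at this
    exact_mod_cast this
  have hne : (∏ i, ((a i).factorial : ℝ)) ≠ 0 :=
    Finset.prod_ne_zero_iff.mpr fun i _ => by positivity
  have hexp : ∏ i, Real.exp (-(m * p i)) = Real.exp (-(m : ℝ)) := by
    rw [← Real.exp_sum, Finset.sum_neg_distrib, ← Finset.mul_sum, hp, mul_one]
  have hpow : ∏ i, ((m : ℝ) * p i) ^ a i = (m : ℝ) ^ m * ∏ i, p i ^ a i := by
    simp only [mul_pow]
    rw [Finset.prod_mul_distrib, Finset.prod_pow_eq_pow_sum, ha]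
  have hM : (m.factorial : ℝ) ≠ 0 := by positivity
  simp only [poissonMass, multinomialProb]
  rw [Finset.prod_div_distrib, Finset.prod_mul_distrib, hexp, hpow]
  field_simp
  rw [← hspec]
  ring

/-- Binomial point probabilities are `O((k p) ^ (-1/2))` when `p ≤ 1/2`. -/
lemma binomial_sq_le {k : ℕ} (hk : 0 < k) {p : ℝ} (hp : 0 < p) (hp2 : p ≤ 1 / 2) {i : ℕ}
    (hi : i ≤ k) :
    ((k.choose i : ℝ) * p ^ i * (1 - p) ^ (k - i)) ^ 2 * (k * p) ≤ 16 := by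
  set b := (k.choose i : ℝ) * p ^ i * (1 - p) ^ (k - i) with hb
  have hk' : (1 : ℝ) ≤ k := by exact_mod_cast hk
  have hident : b * poissonMass k k = poissonMass (k * p) i * poissonMass (k * (1 - p)) (k - i) := by
    have hc : (k.choose i : ℝ) * i.factorial * (k - i).factorial = k.factorial := by
      exact_mod_cast Nat.choose_mul_factorial_mul_factorial hi
    have hexp : Real.exp (-(k * p)) * Real.exp (-(k * (1 - p))) = Real.exp (-(k : ℝ)) := by
      rw [← Real.exp_add]; congr 1; ring
    have hpow : (k : ℝ) ^ k = (k : ℝ) ^ i * (k : ℝ) ^ (k - i) := by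
      rw [← pow_add]; congr 1; omega
    have hK : (k.factorial : ℝ) ≠ 0 := by positivity
    have hI : (i.factorial : ℝ) ≠ 0 := by positivity
    have hJ : ((k - i).factorial : ℝ) ≠ 0 := by positivity
    simp only [poissonMass]
    rw [← hexp, hpow, mul_pow, mul_pow, hb, ← mul_div_assoc, div_mul_div_comm,
      div_eq_div_iff hK (mul_ne_zero hI hJ), ← hc]
    ring
  have hb0 : 0 ≤ b := by
    have : 0 ≤ 1 - p := by linarith
    positivity
  have hst := one_le_poissonMass_self hk
  have h1 := one_add_mul_poissonMass_sq_le (x := k * p) (by positivity) i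
  have h2 := one_add_mul_poissonMass_sq_le (x := k * (1 - p))
    (mul_nonneg (by linarith) (by linarith)) (k - i)
  set P := poissonMass (k * p) i
  set Q := poissonMass (k * (1 - p)) (k - i)
  have hbb : b ≤ Real.exp 1 * √k * (P * Q) := by
    rw [← hident]
    calc b = b * 1 := (mul_one b).symm
      _ ≤ b * (Real.exp 1 * √k * poissonMass k k) := by gcongr
      _ = _ := by ring
  have hsq : b ^ 2 ≤ Real.exp 1 ^ 2 * k * (P ^ 2 * Q ^ 2) := by
    have := pow_le_pow_left₀ hb0 hbb 2
    rwa [mul_pow (Real.exp 1 * √k), mul_pow (Real.exp 1), Real.sq_sqrt (by positivity),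
      mul_pow P] at this
  have hP : k * p * P ^ 2 ≤ 1 := by nlinarith [sq_nonneg P]
  have hQ : k * Q ^ 2 ≤ 2 := by
    have : (k : ℝ) / 2 * Q ^ 2 ≤ (1 + k * (1 - p)) * Q ^ 2 := by
      gcongr; nlinarith
    linarith
  have he : Real.exp 1 ^ 2 ≤ 8 := by
    have := Real.exp_one_lt_d9
    have h0 := Real.exp_pos 1
    nlinarith
  calc b ^ 2 * (k * p) ≤ Real.exp 1 ^ 2 * k * (P ^ 2 * Q ^ 2) * (k * p) := by gcongr
    _ = Real.exp 1 ^ 2 * ((k * p * P ^ 2) * (k * Q ^ 2)) := by ring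
    _ ≤ 8 * (1 * 2) := by gcongr
    _ = 16 := by norm_num

/-! ### Multinomial distributions without large entries -/

/-- If nonnegative means bounded by `L` sum to `m`, then `∏ (1 + xᵢ) ≥ (1 + L) ^ (m / L)`: by
Bernoulli's inequality, `1 + xᵢ ≥ (1 + L) ^ (xᵢ / L)` for each `i`. -/
lemma rpow_le_prod_one_add {n : ℕ} (x : Fin n → ℝ) {L m : ℝ} (hL : 0 < L)
    (hx0 : ∀ i, 0 ≤ x i) (hxL : ∀ i, x i ≤ L) (hsum : ∑ i, x i = m) :
    (1 + L) ^ (m / L) ≤ ∏ i, (1 + x i) := by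
  rw [← hsum, Finset.sum_div, Real.rpow_sum_of_pos (by linarith)]
  refine Finset.prod_le_prod (fun i _ => by positivity) fun i _ => ?_
  have h := rpow_one_add_le_one_add_mul_self (s := L) (by linarith) (p := x i / L)
    (div_nonneg (hx0 i) hL.le) ((div_le_one hL).mpr (hxL i))
  rwa [div_mul_cancel₀ _ hL.ne'] at h

/-- The final estimate for an arbitrary probability vector with entries at most `K / √m`. -/
lemma multinomialProb_le_of_le {n : ℕ} (p : Fin n → ℝ) (hp0 : ∀ i, 0 ≤ p i) (hp : ∑ i, p i = 1)
    {K : ℝ} (hK : 1 ≤ K) {m : ℕ} (hm8 : 8 ≤ m) (hmK : 64 * K ^ 2 ≤ m)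
    (hpK : ∀ i, m * p i ≤ K * √m) (a : Fin n → ℕ) (ha : ∑ i, a i = m) :
    multinomialProb p a ≤ (m : ℝ) ^ (-(1 / (8 * K) * √m)) := by
  have hm : (8 : ℝ) ≤ m := by exact_mod_cast hm8
  have hm0 : (0 : ℝ) < m := by linarith
  have hs0 : 0 < √(m : ℝ) := Real.sqrt_pos.mpr hm0
  have hss : √(m : ℝ) * √m = m := Real.mul_self_sqrt hm0.le
  have hsK : 8 * K ≤ √(m : ℝ) := Real.le_sqrt_of_sq_le (by nlinarith)
  set Q := multinomialProb p a with hQ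
  have hQ0 : 0 ≤ Q := by
    have : 0 ≤ ∏ i, p i ^ a i := Finset.prod_nonneg fun i _ => pow_nonneg (hp0 i) _
    rw [hQ, multinomialProb]; positivity
  have hx0 : ∀ i, 0 ≤ (m : ℝ) * p i := fun i => mul_nonneg hm0.le (hp0 i)
  have hQle : Q ≤ Real.exp 1 * √m * ∏ i, poissonMass (m * p i) (a i) := by
    rw [← multinomialProb_mul_poissonMass p hp m a ha, ← hQ]
    calc Q = Q * 1 := (mul_one Q).symm
      _ ≤ Q * (Real.exp 1 * √m * poissonMass m m) := by
        gcongr; exact one_le_poissonMass_self (by omega)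
      _ = _ := by ring
  have hprod : (∏ i, (1 + (m : ℝ) * p i)) * (∏ i, poissonMass (m * p i) (a i)) ^ 2 ≤ 1 := by
    rw [← Finset.prod_pow, ← Finset.prod_mul_distrib]
    exact Finset.prod_le_one
      (fun i _ => mul_nonneg (by linarith [hx0 i]) (sq_nonneg _))
      fun i _ => one_add_mul_poissonMass_sq_le (hx0 i) (a i)
  have hlow : (m : ℝ) ^ (√(m : ℝ) / (2 * K)) ≤ ∏ i, (1 + (m : ℝ) * p i) := by
    have h := rpow_le_prod_one_add (fun i => (m : ℝ) * p i) (L := K * √m) (m := m)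
      (by positivity) hx0 hpK (by rw [← Finset.mul_sum, hp, mul_one])
    refine le_trans ?_ h
    have e1 : (m : ℝ) / (K * √m) = √m / K := by
      rw [div_eq_div_iff (by positivity) (by positivity)]
      calc (m : ℝ) * K = (√m * √m) * K := by rw [hss]
        _ = _ := by ring
    have e2 : (m : ℝ) ^ (√(m : ℝ) / (2 * K)) = (√(m : ℝ)) ^ (√(m : ℝ) / K) := by
      rw [Real.sqrt_eq_rpow (m : ℝ), ← Real.rpow_mul hm0.le]
      congr 1
      ring
    rw [e1, e2]
    exact Real.rpow_le_rpow hs0.le (by nlinarith) (by positivity)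
  set W := ∏ i, poissonMass (m * p i) (a i)
  have he : Real.exp 1 ^ 2 ≤ 8 := by
    have := Real.exp_one_lt_d9
    have h0 := Real.exp_pos 1
    nlinarith
  have hW : W ^ 2 ≤ (m : ℝ) ^ (-(√(m : ℝ) / (2 * K))) := by
    rw [Real.rpow_neg hm0.le, ← one_div, le_div_iff₀ (by positivity), mul_comm]
    exact (mul_le_mul_of_nonneg_right hlow (sq_nonneg _)).trans hprod
  -- Half of the exponent `√m / (2K)` is spent on absorbing the factor `e² m ≤ m²`.
  have habs : Real.exp 1 ^ 2 * m ≤ (m : ℝ) ^ (√(m : ℝ) / (4 * K)) := by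
    calc Real.exp 1 ^ 2 * m ≤ (m : ℝ) ^ (2 : ℝ) := by
          rw [Real.rpow_two]; nlinarith
      _ ≤ _ := Real.rpow_le_rpow_of_exponent_le (by linarith)
          (by rw [le_div_iff₀ (by positivity)]; linarith)
  have hsq : Q ^ 2 ≤ ((m : ℝ) ^ (-(1 / (8 * K) * √m))) ^ 2 := by
    calc Q ^ 2 ≤ (Real.exp 1 * √m * W) ^ 2 := pow_le_pow_left₀ hQ0 hQle 2
      _ = Real.exp 1 ^ 2 * m * W ^ 2 := by
          rw [mul_pow, mul_pow, Real.sq_sqrt hm0.le]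
      _ ≤ (m : ℝ) ^ (√(m : ℝ) / (4 * K)) * (m : ℝ) ^ (-(√(m : ℝ) / (2 * K))) := by gcongr
      _ = _ := by
          rw [← Real.rpow_add hm0, ← Real.rpow_natCast, ← Real.rpow_mul hm0.le]
          congr 1
          push_cast
          field_simp
          ring
  exact (pow_le_pow_iff_left₀ hQ0 (by positivity) two_ne_zero).mp hsq

/-! ### Binomial entries -/

/-- For every `C > 0` there are `α > 0` and `m₀` such that for every `k ≥ 1`,
`0 < p ≤ 1/2`, and every `m` with `m₀ ≤ m ≤ C·k·p`, every point probability of the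
multinomial distribution whose probability vector consists of the binomial probabilities
`pᵢ = C(k,i)·pⁱ·(1-p)^{k-i}` (hence also the maximal one, `Π`) is at most `m^{-α·√m}`. -/
theorem multinomial_binomial_probs_bound (C : ℝ) (hC : 0 < C) :
    ∃ α : ℝ, 0 < α ∧ ∃ m₀ : ℕ, ∀ k : ℕ, 0 < k → ∀ p : ℝ, 0 < p → p ≤ 1 / 2 →
      ∀ m : ℕ, m₀ ≤ m → (m : ℝ) ≤ C * k * p →
        ∀ a : Fin (k + 1) → ℕ, ∑ i, a i = m →
          multinomialProb
              (fun i : Fin (k + 1) => (k.choose (i : ℕ) : ℝ) * p ^ (i : ℕ) * (1 - p) ^ (k - (i : ℕ)))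
              a
            ≤ (m : ℝ) ^ (-(α * Real.sqrt m)) := by
  set K : ℝ := 4 * √C + 1 with hKdef
  have hK : 1 ≤ K := by rw [hKdef]; linarith [Real.sqrt_nonneg C]
  refine ⟨1 / (8 * K), by positivity, max 8 ⌈64 * K ^ 2⌉₊, ?_⟩
  intro k hk p hp hp2 m hm hmC a ha
  have hm8 : 8 ≤ m := (le_max_left _ _).trans hm
  have hmK : 64 * K ^ 2 ≤ m := Nat.ceil_le.mp ((le_max_right _ _).trans hm)
  have hq : 0 ≤ 1 - p := by linarith
  have hm0 : (0 : ℝ) < m := by exact_mod_cast (by omega : 0 < m)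
  refine multinomialProb_le_of_le _ (fun i => by positivity) ?_ hK hm8 hmK ?_ a ha
  · rw [Fin.sum_univ_eq_sum_range
      (fun i => (k.choose i : ℝ) * p ^ i * (1 - p) ^ (k - i)) (k + 1)]
    have h := add_pow p (1 - p) k
    rw [add_sub_cancel, one_pow] at h
    refine Eq.trans (Finset.sum_congr rfl fun i _ => ?_) h.symm
    ring
  · intro i
    have h := binomial_sq_le hk hp hp2 (i := (i : ℕ)) (by omega)
    set b := (k.choose (i : ℕ) : ℝ) * p ^ (i : ℕ) * (1 - p) ^ (k - (i : ℕ))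
    have hsq : (m * b) ^ 2 ≤ (4 * √C * √m) ^ 2 := by
      rw [mul_pow (m : ℝ), mul_pow (4 * √C), mul_pow 4, Real.sq_sqrt hC.le, Real.sq_sqrt hm0.le]
      have h1 : m * b ^ 2 ≤ C * 16 := by
        calc m * b ^ 2 ≤ C * k * p * b ^ 2 := by gcongr
          _ = C * (b ^ 2 * (k * p)) := by ring
          _ ≤ C * 16 := by gcongr
      calc (m : ℝ) ^ 2 * b ^ 2 = m * (m * b ^ 2) := by ring
        _ ≤ m * (C * 16) := by gcongr
        _ = _ := by ring
    calc m * b ≤ 4 * √C * √m := abs_le_of_sq_le_sq' hsq (by positivity) |>.2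
      _ ≤ K * √m := by gcongr; rw [hKdef]; linarith
end

section
/- Let G = (V,E) be a random G(n,p) graph, let 3 ≤ k ≤ log n, and pick two functions φ, ψ : {1,...,k} → V uniformly and independently at random (also independently of G). Let C₂ be the event that (φ,ψ) is a type II configuration of G. Then Pr(C₂) ≤ p^k · (2/n + p)^{k−2} · n^{−2}. -/
/-!
Every sequence counted by the event is in particular a path (a simple cycle contains a simple
path), so it suffices to bound the expected number of pairs of paths `φ, ψ` that agree exactly at
their two endpoints. A fixed set of `s` edges lies in the random graph with probability `p ^ s`
(`sum_gnpWeight_le`), and the union of the two paths has `k - 1` edges from `φ`, plus one for each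
edge of `ψ` that is not an edge of `φ`. So for fixed `φ`, `ψ` contributes `p ^ (k - 1)` times the
product over its edges of the weight `1` for an edge of `φ` and `p` otherwise (`sum_typeII_le`).

The first and last edges of `ψ` are never edges of `φ`, since `φ` and `ψ` leave their common
endpoints towards different vertices; they give `p ^ 2`. The inner vertices of `ψ` form a walk of
`k - 2` vertices, and given one vertex, the weights of all possible next vertices add up to at most
`2 + n p`, because a vertex has at most two neighbours on a path (`sum_newWeight_le`). Summing
vertex by vertex gives at most `n (2 + n p) ^ (k - 3)` for each of the `n ^ k` choices of `φ`
(`sum_walk_le`). Dividing by `n ^ (2 k)` leaves `p ^ (k + 1) (2 / n + p) ^ (k - 3) n ^ (-2)`, and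
one factor `p` is at most `2 / n + p`.
-/

open scoped Classical

/-- The number of edges of a graph on `Fin n`. -/
noncomputable def edgeCount {n : ℕ} (G : SimpleGraph (Fin n)) : ℕ := G.edgeFinset.card

/-- The probability of the graph `G` under the Erdős–Rényi `G(n,p)` distribution. -/
noncomputable def gnpWeight (n : ℕ) (p : ℝ) (G : SimpleGraph (Fin n)) : ℝ :=
  p ^ edgeCount G * (1 - p) ^ (n.choose 2 - edgeCount G)

/-- The probability of an event `A` depending on a `G(n,p)` graph together with two
uniformly random independent maps `φ ψ : Fin k → Fin n`. -/
noncomputable def gnpCfgProb (n k : ℕ) (p : ℝ)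
    (A : SimpleGraph (Fin n) → (Fin k → Fin n) → (Fin k → Fin n) → Prop) : ℝ :=
  (∑ G : SimpleGraph (Fin n), ∑ φ : Fin k → Fin n, ∑ ψ : Fin k → Fin n,
      if A G φ ψ then gnpWeight n p G else 0) / (n : ℝ) ^ (2 * k)

/-- `(φ 1, …, φ k, φ 1)` is a simple cycle of `G`: the `φ i` are distinct and consecutive
vertices (cyclically) are adjacent. -/
def IsCycleSeq {V : Type*} {k : ℕ} (G : SimpleGraph V) (φ : Fin k → V) : Prop :=
  Function.Injective φ ∧ ∀ i : Fin k, G.Adj (φ i) (φ (finRotate k i))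

/-- `(φ 1, …, φ k)` is a simple path of `G`: the `φ i` are distinct and consecutive
vertices are adjacent. -/
def IsPathSeq {V : Type*} {k : ℕ} (G : SimpleGraph V) (φ : Fin k → V) : Prop :=
  Function.Injective φ ∧
    ∀ (i : ℕ) (h : i + 1 < k), G.Adj (φ ⟨i, Nat.lt_of_succ_lt h⟩) (φ ⟨i + 1, h⟩)

/-- A type I configuration: `k ≤ log n`, no confluences (`φ i ≠ ψ i` for all `i`), and both
`(φ 1, …, φ k, φ 1)` and `(ψ 1, …, ψ k, ψ 1)` are simple cycles of `G`. -/
def TypeI {n k : ℕ} (G : SimpleGraph (Fin n)) (φ ψ : Fin k → Fin n) : Prop :=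
  (k : ℝ) ≤ Real.log n ∧ (∀ i, φ i ≠ ψ i) ∧ IsCycleSeq G φ ∧ IsCycleSeq G ψ

/-- A type II configuration: `k ≤ log n`, each of `(φ 1, …, φ k)` and `(ψ 1, …, ψ k)` is a
simple path or a simple cycle of `G`, and the first and last indices are the only
confluences. -/
def TypeII {n k : ℕ} (G : SimpleGraph (Fin n)) (φ ψ : Fin k → Fin n) : Prop :=
  (k : ℝ) ≤ Real.log n ∧ (IsPathSeq G φ ∨ IsCycleSeq G φ) ∧
    (IsPathSeq G ψ ∨ IsCycleSeq G ψ) ∧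
    ∀ i : Fin k, (φ i = ψ i ↔ ((i : ℕ) = 0 ∨ (i : ℕ) = k - 1))

/-! ### Edge sets in the random graph -/

theorem gnpWeight_nonneg {n : ℕ} {p : ℝ} (hp0 : 0 ≤ p) (hp1 : p ≤ 1)
    (G : SimpleGraph (Fin n)) : 0 ≤ gnpWeight n p G :=
  mul_nonneg (pow_nonneg hp0 _) (pow_nonneg (by linarith) _)

/-- A sum of nonnegative terms over a set on which `f` is injective is at most the sum over a set
containing the image. -/
theorem sum_comp_le_of_injOn {α β : Type*} (s : Finset α) (t : Finset β) (f : α → β)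
    (hf : Set.InjOn f s) (hst : ∀ a ∈ s, f a ∈ t) (g : β → ℝ) (hg : ∀ b, 0 ≤ g b) :
    ∑ a ∈ s, g (f a) ≤ ∑ b ∈ t, g b := by
  rw [← Finset.sum_image (f := g) (g := f) hf]
  refine Finset.sum_le_sum_of_subset_of_nonneg ?_ fun b _ _ => hg b
  intro b hb
  obtain ⟨a, ha, rfl⟩ := Finset.mem_image.1 hb
  exact hst a ha

/-- The probability that all edges of `S` are present in `G(n,p)` is at most `p ^ #S`. The edges
outside `S` range over all subsets of the remaining edges, and the weights of these add up to a
power of `p + (1 - p) = 1`. -/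
theorem sum_gnpWeight_le {n : ℕ} {p : ℝ} (hp0 : 0 ≤ p) (hp1 : p ≤ 1)
    (S : Finset (Sym2 (Fin n))) :
    ∑ G : SimpleGraph (Fin n), (if S ⊆ G.edgeFinset then gnpWeight n p G else 0) ≤ p ^ S.card := by
  rw [← Finset.sum_filter]
  set E : Finset (Sym2 (Fin n)) := (⊤ : SimpleGraph (Fin n)).edgeFinset with hE
  have hEc : E.card = n.choose 2 := by
    rw [hE]
    have := SimpleGraph.card_edgeFinset_top_eq_card_choose_two (V := Fin n)
    rw [Fintype.card_fin] at this
    convert this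
  have hsub : ∀ G : SimpleGraph (Fin n), G.edgeFinset ⊆ E := fun G =>
    SimpleGraph.edgeFinset_mono le_top
  have h1 : ∀ G ∈ Finset.univ.filter (fun G : SimpleGraph (Fin n) => S ⊆ G.edgeFinset),
      gnpWeight n p G = p ^ S.card * (p ^ (G.edgeFinset \ S).card *
        (1 - p) ^ ((E \ S).card - (G.edgeFinset \ S).card)) := by
    intro G hG
    have hG' : S ⊆ G.edgeFinset := (Finset.mem_filter.1 hG).2
    have a1 := Finset.card_sdiff_add_card_eq_card hG'
    have a2 := Finset.card_sdiff_add_card_eq_card (hG'.trans (hsub G))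
    have a3 := Finset.card_le_card (hsub G)
    unfold gnpWeight edgeCount
    rw [← mul_assoc, ← pow_add, ← hEc]
    congr 2 <;> omega
  rw [Finset.sum_congr rfl h1, ← Finset.mul_sum]
  have h2 := sum_comp_le_of_injOn
    (Finset.univ.filter (fun G : SimpleGraph (Fin n) => S ⊆ G.edgeFinset)) (E \ S).powerset
    (fun G => G.edgeFinset \ S)
    (by
      intro G hG H hH h
      have hG' : S ⊆ G.edgeFinset := (Finset.mem_filter.1 hG).2
      have hH' : S ⊆ H.edgeFinset := (Finset.mem_filter.1 hH).2
      have h' : G.edgeFinset \ S = H.edgeFinset \ S := h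
      have : G.edgeFinset = H.edgeFinset := by
        rw [← Finset.sdiff_union_of_subset hG', h', Finset.sdiff_union_of_subset hH']
      exact SimpleGraph.edgeFinset_inj.1 this)
    (by
      intro G _
      exact Finset.mem_powerset.2 (Finset.sdiff_subset_sdiff (hsub G) le_rfl))
    (fun T => p ^ T.card * (1 - p) ^ ((E \ S).card - T.card))
    (fun T => mul_nonneg (pow_nonneg hp0 _) (pow_nonneg (by linarith) _))
  rw [Finset.sum_pow_mul_eq_add_pow] at h2
  have h3 : (p + (1 - p)) ^ (E \ S).card = 1 := by
    rw [add_sub_cancel, one_pow]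
  rw [h3] at h2
  exact mul_le_of_le_one_right (pow_nonneg hp0 _) h2

/-! ### Weighted walks -/

/-- Walks are summed vertex by vertex: if the weights of the steps leaving any vertex add up to at
most `C`, the walks with `m` steps have total weight at most `|V| C ^ m`. -/
theorem sum_walk_le {V : Type*} [Fintype V] (w : V → V → ℝ) (hw : ∀ x y, 0 ≤ w x y) (C : ℝ)
    (hC : ∀ x, ∑ y, w x y ≤ C) (m : ℕ) :
    ∑ χ : Fin (m + 1) → V, ∏ i : Fin m, w (χ i.castSucc) (χ i.succ)
      ≤ Fintype.card V * C ^ m := by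
  induction m with
  | zero => simp
  | succ m ih =>
    rw [← (Fin.snocEquiv (fun _ : Fin (m + 2) => V)).sum_comp, Fintype.sum_prod_type_right]
    have key : ∀ χ : Fin (m + 1) → V, ∑ y : V, ∏ i : Fin (m + 1),
        w (Fin.snocEquiv (fun _ : Fin (m + 2) => V) (y, χ) i.castSucc)
          (Fin.snocEquiv (fun _ : Fin (m + 2) => V) (y, χ) i.succ)
        ≤ (∏ i : Fin m, w (χ i.castSucc) (χ i.succ)) * C := by
      intro χ
      have : ∀ y : V, ∏ i : Fin (m + 1),
          w (Fin.snocEquiv (fun _ : Fin (m + 2) => V) (y, χ) i.castSucc)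
            (Fin.snocEquiv (fun _ : Fin (m + 2) => V) (y, χ) i.succ)
          = (∏ i : Fin m, w (χ i.castSucc) (χ i.succ)) * w (χ (Fin.last m)) y := by
        intro y
        rw [Fin.prod_univ_castSucc]
        simp only [Fin.snocEquiv, Equiv.coe_fn_mk, Fin.succ_castSucc, Fin.snoc_castSucc,
          Fin.succ_last, Fin.snoc_last]
      simp_rw [this]
      rw [← Finset.mul_sum]
      exact mul_le_mul_of_nonneg_left (hC _) (Finset.prod_nonneg fun _ _ => hw _ _)
    refine (Finset.sum_le_sum fun χ _ => key χ).trans ?_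
    rw [← Finset.sum_mul]
    by_cases hV : IsEmpty V
    · simp
    · rw [not_isEmpty_iff] at hV
      have hC0 : 0 ≤ C := (Finset.sum_nonneg fun y _ => hw (Classical.arbitrary V) y).trans (hC _)
      rw [pow_succ, ← mul_assoc]
      exact mul_le_mul_of_nonneg_right ih hC0

/-! ### Edges of vertex sequences -/

/-- The `i`-th edge `{φ i, φ (i + 1)}` of a vertex sequence. -/
def stepEdge {n m : ℕ} (φ : Fin (m + 1) → Fin n) (i : Fin m) : Sym2 (Fin n) :=
  s(φ i.castSucc, φ i.succ)

/-- The set of all edges traversed by a vertex sequence. -/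
noncomputable def stepEdges {n m : ℕ} (φ : Fin (m + 1) → Fin n) : Finset (Sym2 (Fin n)) :=
  Finset.univ.image (stepEdge φ)

/-- The weight of a step from `x` to `y` of the second path: `1` if it follows an edge of `φ`, and
`p` if it uses a new edge. -/
noncomputable def newWeight {n m : ℕ} (p : ℝ) (φ : Fin (m + 1) → Fin n) (x y : Fin n) : ℝ :=
  if s(x, y) ∈ stepEdges φ then 1 else p

theorem newWeight_nonneg {n m : ℕ} {p : ℝ} (hp0 : 0 ≤ p) (φ : Fin (m + 1) → Fin n)
    (x y : Fin n) : 0 ≤ newWeight p φ x y := by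
  unfold newWeight; split_ifs <;> linarith

theorem mem_stepEdges {n m : ℕ} (φ : Fin (m + 1) → Fin n) (x y : Fin n) :
    s(x, y) ∈ stepEdges φ ↔ ∃ i : Fin m,
      (φ i.castSucc = x ∧ φ i.succ = y) ∨ (φ i.castSucc = y ∧ φ i.succ = x) := by
  simp [stepEdges, stepEdge]

theorem stepEdge_injective {n m : ℕ} {φ : Fin (m + 1) → Fin n}
    (hφ : Function.Injective φ) : Function.Injective (stepEdge φ) := by
  intro i j h
  rcases Sym2.eq_iff.1 h with ⟨h1, _⟩ | ⟨h1, h2⟩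
  · exact Fin.castSucc_injective _ (hφ h1)
  · have e1 := congrArg Fin.val (hφ h1)
    have e2 := congrArg Fin.val (hφ h2)
    simp only [Fin.val_castSucc, Fin.val_succ] at e1 e2
    omega

/-- A vertex has at most two neighbours on a path. -/
theorem card_stepEdges_nbr_le {n m : ℕ} {φ : Fin (m + 1) → Fin n}
    (hφ : Function.Injective φ) (x : Fin n) :
    (Finset.univ.filter fun y => s(x, y) ∈ stepEdges φ).card ≤ 2 := by
  by_cases hx : ∃ i, φ i = x
  · obtain ⟨i, rfl⟩ := hx
    -- The truncations only matter at the two ends of the path, where a neighbour is missing.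
    refine (Finset.card_le_card (t := {φ ⟨min (i + 1) m, by omega⟩, φ ⟨i - 1, by omega⟩})
      ?_).trans Finset.card_le_two
    intro y hy
    obtain ⟨j, ⟨h1, h2⟩ | ⟨h1, h2⟩⟩ := (mem_stepEdges φ _ _).1 (Finset.mem_filter.1 hy).2
    · have e := congrArg Fin.val (hφ h1)
      simp only [Fin.val_castSucc] at e
      rw [Finset.mem_insert]
      left
      rw [← h2]
      congr 1
      ext
      simp only [Fin.val_succ]
      omega
    · have e := congrArg Fin.val (hφ h2)
      simp only [Fin.val_succ] at e
      rw [Finset.mem_insert, Finset.mem_singleton]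
      right
      rw [← h1]
      congr 1
      ext
      simp only [Fin.val_castSucc]
      omega
  · rw [Finset.filter_false_of_mem]
    · simp
    · intro y _ hy
      obtain ⟨j, ⟨h1, h2⟩ | ⟨h1, h2⟩⟩ := (mem_stepEdges φ _ _).1 hy
      · exact hx ⟨_, h1⟩
      · exact hx ⟨_, h2⟩

theorem sum_newWeight_le {n m : ℕ} {p : ℝ} (hp0 : 0 ≤ p) {φ : Fin (m + 1) → Fin n}
    (hφ : Function.Injective φ) (x : Fin n) :
    ∑ y, newWeight p φ x y ≤ 2 + n * p := by
  have h1 : ∀ y, newWeight p φ x y ≤ (if s(x, y) ∈ stepEdges φ then (1 : ℝ) else 0) + p := by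
    intro y; unfold newWeight; split_ifs <;> linarith
  refine (Finset.sum_le_sum fun y _ => h1 y).trans ?_
  rw [Finset.sum_add_distrib, Finset.sum_boole]
  have h2 : ((Finset.univ.filter fun y => s(x, y) ∈ stepEdges φ).card : ℝ) ≤ 2 := by
    exact_mod_cast card_stepEdges_nbr_le hφ x
  simp only [Finset.sum_const, Finset.card_univ, Fintype.card_fin, nsmul_eq_mul]
  linarith

/-- Counting the edges of two paths: those of `φ`, and those of `ψ` that are new. -/
theorem pow_card_union {n m : ℕ} (p : ℝ) {φ ψ : Fin (m + 1) → Fin n}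
    (hφ : Function.Injective φ) (hψ : Function.Injective ψ) :
    p ^ (stepEdges φ ∪ stepEdges ψ).card
      = p ^ m * ∏ i : Fin m, newWeight p φ (ψ i.castSucc) (ψ i.succ) := by
  have h1 : (stepEdges φ).card = m := by
    rw [stepEdges, Finset.card_image_of_injective _ (stepEdge_injective hφ)]; simp
  have h2 : ∏ i : Fin m, newWeight p φ (ψ i.castSucc) (ψ i.succ)
      = p ^ (stepEdges ψ \ stepEdges φ).card := by
    have h3 : stepEdges ψ \ stepEdges φ
        = (Finset.univ.filter fun i => ¬ stepEdge ψ i ∈ stepEdges φ).image (stepEdge ψ) := by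
      ext e
      simp only [stepEdges, Finset.mem_sdiff, Finset.mem_image, Finset.mem_univ, true_and,
        Finset.mem_filter]
      constructor
      · rintro ⟨⟨i, rfl⟩, h⟩; exact ⟨i, h, rfl⟩
      · rintro ⟨i, h, rfl⟩; exact ⟨⟨i, rfl⟩, h⟩
    rw [h3, Finset.card_image_of_injective _ (stepEdge_injective hψ)]
    simp only [newWeight]
    rw [Finset.prod_ite, Finset.prod_const_one, one_mul, Finset.prod_const]
    rfl
  rw [h2, ← pow_add, ← Finset.union_sdiff_self_eq_union,
    Finset.card_union_of_disjoint Finset.disjoint_sdiff, h1]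

/-! ### Type II configurations -/

theorem IsCycleSeq.isPathSeq {V : Type*} {k : ℕ} {G : SimpleGraph V} {φ : Fin k → V}
    (h : IsCycleSeq G φ) : IsPathSeq G φ := by
  refine ⟨h.1, fun i hi => ?_⟩
  obtain ⟨k, rfl⟩ : ∃ l, k = l + 1 := ⟨k - 1, by omega⟩
  have := h.2 ⟨i, Nat.lt_of_succ_lt hi⟩
  rwa [finRotate_of_lt (by omega)] at this

theorem IsPathSeq.stepEdges_subset {n m : ℕ} {G : SimpleGraph (Fin n)} {φ : Fin (m + 1) → Fin n}
    (h : IsPathSeq G φ) : stepEdges φ ⊆ G.edgeFinset := by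
  intro e he
  obtain ⟨i, -, rfl⟩ := Finset.mem_image.1 he
  rw [SimpleGraph.mem_edgeFinset]
  exact h.2 i (by omega)

/-- For fixed `φ` and `ψ`, the probability of a type II configuration: both ends must match, the
first and last edges of `ψ` cost `p` each, and the steps in between are weighted by
`newWeight`. -/
theorem sum_typeII_le {n m : ℕ} {p : ℝ} (hp0 : 0 ≤ p) (hp1 : p ≤ 1)
    (φ ψ : Fin (m + 3) → Fin n) :
    ∑ G : SimpleGraph (Fin n), (if TypeII G φ ψ then gnpWeight n p G else 0)
      ≤ if Function.Injective φ ∧ ψ 0 = φ 0 ∧ ψ (Fin.last _) = φ (Fin.last _) then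
          p ^ (m + 4) * ∏ i : Fin m, newWeight p φ (ψ i.castSucc.castSucc.succ)
            (ψ i.succ.castSucc.succ)
        else 0 := by
  by_cases hex : ∃ G : SimpleGraph (Fin n), TypeII G φ ψ
  swap
  · rw [Finset.sum_eq_zero fun G _ => if_neg fun h => hex ⟨G, h⟩]
    split_ifs
    · exact mul_nonneg (pow_nonneg hp0 _)
        (Finset.prod_nonneg fun _ _ => newWeight_nonneg hp0 _ _ _)
    · exact le_rfl
  obtain ⟨G₀, -, hpφ, hpψ, hc⟩ := hex
  have hφ : Function.Injective φ := hpφ.elim (fun h => h.1) (fun h => h.1)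
  have hψ : Function.Injective ψ := hpψ.elim (fun h => h.1) (fun h => h.1)
  have h0 : ψ 0 = φ 0 := ((hc 0).2 (Or.inl rfl)).symm
  have hl : ψ (Fin.last _) = φ (Fin.last _) := ((hc (Fin.last _)).2 (Or.inr rfl)).symm
  rw [if_pos ⟨hφ, h0, hl⟩]
  have hne : ∀ j : Fin (m + 3), (j : ℕ) ≠ 0 → (j : ℕ) ≠ m + 2 → φ j ≠ ψ j := by
    intro j h1 h2 h
    rcases (hc j).1 h with h | h <;> omega
  have hfirst : newWeight p φ (ψ (0 : Fin (m + 2)).castSucc) (ψ (0 : Fin (m + 2)).succ) = p := by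
    unfold newWeight
    rw [if_neg]
    intro h
    obtain ⟨j, ⟨h1, h2⟩ | ⟨h1, h2⟩⟩ := (mem_stepEdges φ _ _).1 h
    · have h1' := hφ (h1.trans h0)
      have e := congrArg Fin.val h1'
      have hj : j = 0 := by ext; simpa using e
      subst hj
      exact hne _ (by simp) (by simp) h2
    · have e := congrArg Fin.val (hφ (h2.trans h0))
      simp at e
  have hlast : newWeight p φ (ψ (Fin.last (m + 1)).castSucc) (ψ (Fin.last (m + 1)).succ) = p := by
    unfold newWeight
    rw [if_neg]
    intro h
    obtain ⟨j, ⟨h1, h2⟩ | ⟨h1, h2⟩⟩ := (mem_stepEdges φ _ _).1 h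
    · have e := congrArg Fin.val (hφ (h2.trans hl))
      have hj : j = Fin.last (m + 1) := by ext; simpa using e
      subst hj
      exact hne _ (by simp) (by simp) h1
    · have e := congrArg Fin.val (hφ (h1.trans hl))
      simp only [Fin.val_castSucc, Fin.val_last] at e
      omega
  have hstep : ∀ G : SimpleGraph (Fin n), (if TypeII G φ ψ then gnpWeight n p G else 0)
      ≤ if stepEdges φ ∪ stepEdges ψ ⊆ G.edgeFinset then gnpWeight n p G else 0 := by
    intro G
    by_cases hG : TypeII G φ ψ
    · have h1 : IsPathSeq G φ := hG.2.1.elim id IsCycleSeq.isPathSeq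
      have h2 : IsPathSeq G ψ := hG.2.2.1.elim id IsCycleSeq.isPathSeq
      rw [if_pos hG, if_pos (Finset.union_subset h1.stepEdges_subset h2.stepEdges_subset)]
    · rw [if_neg hG]
      split_ifs
      · exact gnpWeight_nonneg hp0 hp1 G
      · exact le_rfl
  refine (Finset.sum_le_sum fun G _ => hstep G).trans ((sum_gnpWeight_le hp0 hp1 _).trans ?_)
  rw [pow_card_union p hφ hψ, Fin.prod_univ_succ, Fin.prod_univ_castSucc, hfirst]
  have hlast' : newWeight p φ (ψ (Fin.last m).succ.castSucc) (ψ (Fin.last m).succ.succ) = p :=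
    hlast
  rw [hlast']
  apply le_of_eq
  have : ∀ i : Fin m, newWeight p φ (ψ i.castSucc.succ.castSucc) (ψ i.castSucc.succ.succ)
      = newWeight p φ (ψ i.castSucc.castSucc.succ) (ψ i.succ.castSucc.succ) := fun i => rfl
  simp_rw [this]
  ring

/-- The sum over `ψ`: its ends are prescribed, so `ψ` is determined by its inner vertices, which
form a weighted walk. -/
theorem sum_sum_typeII_le {n m : ℕ} {p : ℝ} (hp0 : 0 ≤ p) (hp1 : p ≤ 1)
    (φ : Fin (m + 3) → Fin n) :
    ∑ ψ : Fin (m + 3) → Fin n, ∑ G : SimpleGraph (Fin n),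
        (if TypeII G φ ψ then gnpWeight n p G else 0)
      ≤ p ^ (m + 4) * (n * (2 + n * p) ^ m) := by
  refine (Finset.sum_le_sum fun ψ _ => sum_typeII_le hp0 hp1 φ ψ).trans ?_
  by_cases hφ : Function.Injective φ
  swap
  · simp only [hφ, false_and, if_false, Finset.sum_const_zero]
    positivity
  simp only [hφ, true_and]
  rw [← Finset.sum_filter, ← Finset.mul_sum]
  refine mul_le_mul_of_nonneg_left ?_ (pow_nonneg hp0 _)
  have h1 := sum_walk_le (newWeight p φ) (newWeight_nonneg hp0 φ) _ (sum_newWeight_le hp0 hφ) m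
  rw [Fintype.card_fin] at h1
  refine le_trans ?_ h1
  refine sum_comp_le_of_injOn _ Finset.univ
    (fun (ψ : Fin (m + 3) → Fin n) (j : Fin (m + 1)) => ψ j.castSucc.succ) ?_
    (fun _ _ => Finset.mem_univ _)
    (fun χ => ∏ i : Fin m, newWeight p φ (χ i.castSucc) (χ i.succ))
    (fun χ => Finset.prod_nonneg fun _ _ => newWeight_nonneg hp0 _ _ _)
  intro ψ hψ ψ' hψ' h
  have a := (Finset.mem_filter.1 hψ).2
  have b := (Finset.mem_filter.1 hψ').2
  funext j
  induction j using Fin.cases with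
  | zero => rw [a.1, b.1]
  | succ j =>
    induction j using Fin.lastCases with
    | last => exact a.2.trans b.2.symm
    | cast j => exact congrFun h j

/-! ### The probability bound -/

/-- The probability that two uniformly random maps `φ, ψ : Fin k → Fin n` form a type II
configuration of a `G(n,p)` graph is at most `p^k · (2/n + p)^{k-2} · n^{-2}`. -/
theorem typeII_prob_bound (n k : ℕ) (hk : 3 ≤ k) (hk' : (k : ℝ) ≤ Real.log n)
    (p : ℝ) (hp0 : 0 ≤ p) (hp1 : p ≤ 1) :
    gnpCfgProb n k p (fun G φ ψ => TypeII G φ ψ)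
      ≤ p ^ k * (2 / (n : ℝ) + p) ^ (k - 2) * ((n : ℝ) ^ 2)⁻¹ := by
  obtain ⟨m, rfl⟩ : ∃ m, k = m + 3 := ⟨k - 3, by omega⟩
  have hn : 0 < n := by
    rcases Nat.eq_zero_or_pos n with rfl | h
    · exfalso
      rw [Nat.cast_zero, Real.log_zero] at hk'
      push_cast at hk'
      have : (0 : ℝ) ≤ m := Nat.cast_nonneg m
      linarith
    · exact h
  have hn' : (0 : ℝ) < n := Nat.cast_pos.2 hn
  have hsum : (∑ G : SimpleGraph (Fin n), ∑ φ : Fin (m + 3) → Fin n, ∑ ψ : Fin (m + 3) → Fin n,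
      if TypeII G φ ψ then gnpWeight n p G else 0)
      ≤ (n : ℝ) ^ (m + 3) * (p ^ (m + 4) * (n * (2 + n * p) ^ m)) := by
    rw [Finset.sum_comm]
    have : ∀ φ : Fin (m + 3) → Fin n, ∑ G : SimpleGraph (Fin n), ∑ ψ : Fin (m + 3) → Fin n,
        (if TypeII G φ ψ then gnpWeight n p G else 0)
        ≤ p ^ (m + 4) * (n * (2 + n * p) ^ m) := by
      intro φ
      rw [Finset.sum_comm]
      exact sum_sum_typeII_le hp0 hp1 φ
    refine (Finset.sum_le_sum fun φ _ => this φ).trans (le_of_eq ?_)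
    simp
  have h2 : (2 + n * p : ℝ) = n * (2 / n + p) := by
    field_simp
  have hq : p ≤ 2 / (n : ℝ) + p := by
    have : 0 ≤ 2 / (n : ℝ) := by positivity
    linarith
  unfold gnpCfgProb
  calc _ ≤ (n : ℝ) ^ (m + 3) * (p ^ (m + 4) * (n * (2 + n * p) ^ m)) / (n : ℝ) ^ (2 * (m + 3)) :=
        div_le_div_of_nonneg_right hsum (by positivity)
    _ = p ^ (m + 3) * (p * (2 / (n : ℝ) + p) ^ m) * ((n : ℝ) ^ 2)⁻¹ := by
        rw [h2, mul_pow]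
        generalize (2 / (n : ℝ) + p) ^ m = X
        have : (n : ℝ) ^ (2 * (m + 3)) = (n : ℝ) ^ (m + 3) * n * (n : ℝ) ^ m * (n : ℝ) ^ 2 := by
          ring
        rw [this]
        field_simp
        ring
    _ ≤ p ^ (m + 3) * (2 / (n : ℝ) + p) ^ (m + 3 - 2) * ((n : ℝ) ^ 2)⁻¹ := by
        have e : m + 3 - 2 = m + 1 := by omega
        rw [e, pow_succ' (2 / (n : ℝ) + p) m]
        gcongr
end
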